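/- arXiv:2305.02175 — 2 statements merged into one kernel-verified Lean document; each statement's English description precedes it below -/
import Mathlib

section
/- Let ℓ, m be natural numbers with m ≤ ℓ, and for z ≥ 1 define the associated Legendre function P_ℓ^m(z) := (1/(2^ℓ · ℓ!)) · (z² − 1)^{m/2} · [(d/dx)^{ℓ+m} (x² − 1)^ℓ]_{x=z}, where (z² − 1)^{m/2} is the real power. Then P_ℓ^m(z) = ((ℓ+m)!/(2^ℓ · ℓ!)) · Σ_{k=0}^{ℓ−m} C(ℓ,k) · C(ℓ,m+k) · (z − 1)^{ℓ−(m/2+k)} · (z + 1)^{m/2+k}, where the powers of (z−1) and (z+1) are real powers (with the convention 0^0 = 1). -/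
/-!
By Rodrigues' formula everything reduces to differentiating `(x - 1)^ℓ (x + 1)^ℓ`. For the divided
derivatives `D_n = (1/n!) (d/dx)^n` the Leibniz rule has no binomial coefficients, and
`D_k (x + r)^n = C(n,k) (x + r)^(n-k)`, so each coefficient in the expansion is just a product of
two binomials. The prefactor `(z² - 1)^{m/2}` splits evenly over `z - 1` and `z + 1`.
-/

open scoped Nat

/-- The associated Legendre function of degree `ℓ` and order `m`, for real `z ≥ 1`:
`P_ℓ^m(z) = (1/(2^ℓ ℓ!)) (z²−1)^{m/2} (d/dx)^{ℓ+m} (x²−1)^ℓ |_{x=z}`,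
with `(z²−1)^{m/2}` the real power. -/
noncomputable def assocLegendre (ℓ m : ℕ) (z : ℝ) : ℝ :=
  (1 / (2 ^ ℓ * (ℓ ! : ℝ))) * (z ^ 2 - 1) ^ ((m : ℝ) / 2) *
    iteratedDeriv (ℓ + m) (fun x : ℝ => (x ^ 2 - 1) ^ ℓ) z

section HasseDeriv

open Polynomial

variable {R : Type*}

theorem hasseDeriv_X_add_C_pow [Semiring R] (r : R) (n k : ℕ) :
    hasseDeriv k ((X + C r) ^ n) = n.choose k • (X + C r) ^ (n - k) := by
  ext i
  have choose_mul_choose : (i + k).choose k * n.choose (i + k) = n.choose k * (n - k).choose i := by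
    rw [mul_comm, Nat.choose_mul (Nat.le_add_left k i), Nat.add_sub_cancel]
  rw [hasseDeriv_coeff, coeff_smul, coeff_X_add_C_pow, coeff_X_add_C_pow, nsmul_eq_mul,
    Nat.sub_sub, Nat.add_comm k i, ← (Nat.cast_commute _ _).eq, ← (Nat.cast_commute _ _).eq,
    ← mul_assoc, ← mul_assoc, ← Nat.cast_mul, ← Nat.cast_mul, choose_mul_choose]

theorem hasseDeriv_X_add_C_pow_mul_X_add_C_pow [CommSemiring R] (a b : R) (p q m : ℕ) :
    hasseDeriv (q + m) ((X + C a) ^ p * (X + C b) ^ q) =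
      ∑ k ∈ Finset.range (q + 1),
        (q.choose k * p.choose (m + k)) • ((X + C a) ^ (p - (m + k)) * (X + C b) ^ k) := by
  have order_lt_vanish : ∀ j ∈ Finset.range m,
      hasseDeriv j ((X + C a) ^ p) * hasseDeriv (q + m - j) ((X + C b) ^ q) = 0 := by
    intro j hj
    have hq : q < q + m - j := by have := Finset.mem_range.1 hj; omega
    rw [hasseDeriv_X_add_C_pow b, Nat.choose_eq_zero_of_lt hq, zero_smul, mul_zero]
  rw [hasseDeriv_mul, Finset.Nat.sum_antidiagonal_eq_sum_range_succ_mk,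
    show (q + m).succ = m + (q + 1) by omega, Finset.sum_range_add,
    Finset.sum_eq_zero order_lt_vanish, zero_add]
  refine Finset.sum_congr rfl fun k hk => ?_
  have hkq : k ≤ q := Finset.mem_range_succ_iff.1 hk
  rw [show q + m - (m + k) = q - k by omega, hasseDeriv_X_add_C_pow, hasseDeriv_X_add_C_pow,
    Nat.sub_sub_self hkq, Nat.choose_symm hkq, smul_mul_smul_comm, mul_comm (p.choose _)]

end HasseDeriv

section IteratedDeriv

open Polynomial

variable {𝕜 : Type*} [NontriviallyNormedField 𝕜]

theorem iteratedDeriv_eval (p : 𝕜[X]) (n : ℕ) :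
    iteratedDeriv n (fun x => p.eval x) = fun x => (derivative^[n] p).eval x := by
  induction n with
  | zero => exact iteratedDeriv_zero
  | succ n ih =>
    ext x
    rw [iteratedDeriv_succ, ih, Polynomial.deriv, Function.iterate_succ_apply']

theorem iteratedDeriv_eval_eq_factorial_mul_eval_hasseDeriv (p : 𝕜[X]) (n : ℕ) (x : 𝕜) :
    iteratedDeriv n (fun x => p.eval x) x = n ! * (hasseDeriv n p).eval x := by
  simp_rw [iteratedDeriv_eval, ← factorial_smul_hasseDeriv, LinearMap.smul_apply, eval_smul,
    nsmul_eq_mul]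

theorem iteratedDeriv_sq_sub_one_pow (ℓ m : ℕ) (z : 𝕜) :
    iteratedDeriv (ℓ + m) (fun x : 𝕜 => (x ^ 2 - 1) ^ ℓ) z =
      (ℓ + m)! * ∑ k ∈ Finset.range (ℓ - m + 1),
        (ℓ.choose k : 𝕜) * ℓ.choose (m + k) * ((z - 1) ^ (ℓ - (m + k)) * (z + 1) ^ k) := by
  have factorization : (fun x : 𝕜 => (x ^ 2 - 1) ^ ℓ) =
      fun x => ((X + C (-1)) ^ ℓ * (X + C 1) ^ ℓ : 𝕜[X]).eval x := by
    ext x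
    simp only [eval_mul, eval_pow, eval_add, eval_X, eval_C, ← mul_pow]
    ring
  rw [factorization, iteratedDeriv_eval_eq_factorial_mul_eval_hasseDeriv,
    hasseDeriv_X_add_C_pow_mul_X_add_C_pow, eval_finsetSum]
  simp only [nsmul_eq_mul, eval_mul, eval_natCast, eval_pow, eval_add, eval_X, eval_C,
    Nat.cast_mul, ← sub_eq_add_neg]
  congr 1
  have range_subset : Finset.range (ℓ - m + 1) ⊆ Finset.range (ℓ + 1) :=
    Finset.range_mono (by omega)
  refine (Finset.sum_subset range_subset fun k _ hk => ?_).symm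
  have hℓ : ℓ < m + k := by rw [Finset.mem_range] at hk; omega
  rw [Nat.choose_eq_zero_of_lt hℓ, Nat.cast_zero, mul_zero, zero_mul]

end IteratedDeriv

theorem mul_rpow_mul_pow_mul_pow {x y s : ℝ} (hx : 0 ≤ x) (hy : 0 ≤ y) (hs : 0 ≤ s) (a b : ℕ) :
    (x * y) ^ s * (x ^ a * y ^ b) = x ^ (s + a) * y ^ (s + b) := by
  rw [Real.mul_rpow hx hy, Real.rpow_add_of_nonneg hx hs a.cast_nonneg,
    Real.rpow_add_of_nonneg hy hs b.cast_nonneg, Real.rpow_natCast, Real.rpow_natCast,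
    mul_mul_mul_comm]

/-- Closed-form expansion of the associated Legendre functions
(Lemma 4.5 of the paper). All fractional powers are real powers, with `0^0 = 1`. -/
theorem assocLegendre_eq_sum (ℓ m : ℕ) (hm : m ≤ ℓ) (z : ℝ) (hz : 1 ≤ z) :
    assocLegendre ℓ m z =
      (((ℓ + m)! : ℝ) / (2 ^ ℓ * (ℓ ! : ℝ))) *
        ∑ k ∈ Finset.range (ℓ - m + 1),
          (ℓ.choose k : ℝ) * (ℓ.choose (m + k) : ℝ) *
            (z - 1) ^ ((ℓ : ℝ) - ((m : ℝ) / 2 + (k : ℝ))) * (z + 1) ^ ((m : ℝ) / 2 + (k : ℝ)) := by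
  rw [assocLegendre, iteratedDeriv_sq_sub_one_pow, mul_mul_mul_comm, one_div_mul_eq_div,
    Finset.mul_sum]
  congr 1
  refine Finset.sum_congr rfl fun k hk => ?_
  have hkℓ : m + k ≤ ℓ := by have := Finset.mem_range.1 hk; omega
  have exponent : (ℓ : ℝ) - (m / 2 + k) = m / 2 + (ℓ - (m + k) : ℕ) := by
    push_cast [hkℓ]
    ring
  have hz_sub : 0 ≤ z - 1 := by linarith
  have hz_add : 0 ≤ z + 1 := by linarith
  rw [exponent, mul_assoc (_ * _), ← mul_rpow_mul_pow_mul_pow hz_sub hz_add (by positivity),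
    show z ^ 2 - 1 = (z - 1) * (z + 1) by ring]
  ring
end

section
/- Let ℓ, m be natural numbers with m ≤ ℓ. Then for every real z ≥ 1, (z − 1)^ℓ ≤ √π · (ℓ−m)! · P_ℓ^m(z) / (2^ℓ · Γ(ℓ + 1/2)) ≤ (z + 1)^ℓ, where Γ is the real Gamma function. -/
/-!
Write `(x² - 1)^ℓ` as a monic polynomial of degree `2ℓ` with all its roots in `[-1, 1]`. The
derivative of `∏ (x - rᵢ)` is the sum of the products with one factor left out, so by induction the
`n`-th derivative of such a polynomial of degree `d`, divided by `d (d - 1) ⋯ (d - n + 1)`, lies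
between `(z - 1)^(d - n)` and `(z + 1)^(d - n)`. For `n = ℓ + m` the exponent is `ℓ - m`; the
missing power `m` comes from `z - 1 ≤ √(z² - 1) ≤ z + 1`, and Legendre's formula for `Γ(ℓ + 1/2)`
shows that the normalization in the theorem is exactly division by `(2ℓ)! / (ℓ - m)!`.
-/

open scoped Nat

open Polynomial Set

theorem iteratedDeriv_polynomial_eval {𝕜 : Type*} [NontriviallyNormedField 𝕜] (p : 𝕜[X])
    (n : ℕ) : iteratedDeriv n (fun x => p.eval x) = fun x => (derivative^[n] p).eval x := by
  induction n with
  | zero => simp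
  | succ n ih =>
    ext x
    rw [iteratedDeriv_succ, ih, Polynomial.deriv, Function.iterate_succ_apply']

theorem eval_iterate_derivative_succ_prod_X_sub_C {R : Type*} [CommRing R] [DecidableEq R]
    (s : Multiset R) (n : ℕ) (z : R) :
    (derivative^[n + 1] (s.map fun r => X - C r).prod).eval z =
      (s.map fun r => (derivative^[n] ((s.erase r).map fun r => X - C r).prod).eval z).sum := by
  rw [Function.iterate_succ_apply, derivative_prod]
  simp only [derivative_X_sub_C, mul_one, ← Module.End.pow_apply, ← coe_evalRingHom,
    map_multiset_sum, Multiset.map_map, Function.comp_def]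

theorem descFactorial_succ_mul_pow_sub {R : Type*} [Semiring R] (d n : ℕ) (x : R) :
    d.descFactorial (n + 1) * x ^ (d - (n + 1)) =
      d • ((d - 1).descFactorial n * x ^ (d - 1 - n)) := by
  cases d with
  | zero => simp
  | succ d => rw [Nat.succ_descFactorial_succ, Nat.cast_mul, mul_assoc, ← nsmul_eq_mul,
      Nat.add_sub_add_right, Nat.add_sub_cancel]

section RealRooted

variable {R : Type*} [CommRing R] [PartialOrder R] [IsOrderedRing R] {s : Multiset R} {a b z : R}

theorem pow_card_le_eval_prod_X_sub_C (hs : ∀ r ∈ s, r ≤ b) (hz : b ≤ z) :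
    (z - b) ^ s.card ≤ (s.map fun r => X - C r).prod.eval z := by
  simpa [eval_multiset_prod, Function.comp_def] using
    Multiset.prod_map_le_prod_map₀ (s := s) (fun _ => z - b) (fun r => z - r)
      (fun _ _ => sub_nonneg.2 hz) (fun r hr => sub_le_sub_left (hs r hr) z)

theorem eval_prod_X_sub_C_le_pow_card (hs : ∀ r ∈ s, r ∈ Icc a z) :
    (s.map fun r => X - C r).prod.eval z ≤ (z - a) ^ s.card := by
  simpa [eval_multiset_prod, Function.comp_def] using
    Multiset.prod_map_le_prod_map₀ (s := s) (fun r => z - r) (fun _ => z - a)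
      (fun r hr => sub_nonneg.2 (hs r hr).2) (fun r hr => sub_le_sub_left (hs r hr).1 z)

-- For `n > s.card` the truncated exponent is harmless: the falling factorial vanishes.
theorem descFactorial_mul_pow_le_eval_iterate_derivative_prod_X_sub_C (hs : ∀ r ∈ s, r ≤ b)
    (hz : b ≤ z) (n : ℕ) :
    s.card.descFactorial n * (z - b) ^ (s.card - n) ≤
      (derivative^[n] (s.map fun r => X - C r).prod).eval z := by
  classical
  induction n generalizing s with
  | zero => simpa using pow_card_le_eval_prod_X_sub_C hs hz
  | succ n ih =>
    have erase_bound : ∀ r ∈ s, (s.card - 1).descFactorial n * (z - b) ^ (s.card - 1 - n) ≤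
        (derivative^[n] ((s.erase r).map fun r => X - C r).prod).eval z := fun r hr => by
      simpa only [Multiset.card_erase_of_mem hr, Nat.pred_eq_sub_one] using
        ih (s := s.erase r) fun x hx => hs x (Multiset.mem_of_mem_erase hx)
    rw [eval_iterate_derivative_succ_prod_X_sub_C, descFactorial_succ_mul_pow_sub]
    simpa only [Multiset.card_map] using
      Multiset.card_nsmul_le_sum (Multiset.forall_mem_map_iff.2 erase_bound)

theorem eval_iterate_derivative_prod_X_sub_C_le_descFactorial_mul_pow
    (hs : ∀ r ∈ s, r ∈ Icc a z) (n : ℕ) :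
    (derivative^[n] (s.map fun r => X - C r).prod).eval z ≤
      s.card.descFactorial n * (z - a) ^ (s.card - n) := by
  classical
  induction n generalizing s with
  | zero => simpa using eval_prod_X_sub_C_le_pow_card hs
  | succ n ih =>
    have erase_bound : ∀ r ∈ s, (derivative^[n] ((s.erase r).map fun r => X - C r).prod).eval z ≤
        (s.card - 1).descFactorial n * (z - a) ^ (s.card - 1 - n) := fun r hr => by
      simpa only [Multiset.card_erase_of_mem hr, Nat.pred_eq_sub_one] using
        ih (s := s.erase r) fun x hx => hs x (Multiset.mem_of_mem_erase hx)
    rw [eval_iterate_derivative_succ_prod_X_sub_C, descFactorial_succ_mul_pow_sub]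
    simpa only [Multiset.card_map] using
      Multiset.sum_le_card_nsmul _ _ (Multiset.forall_mem_map_iff.2 erase_bound)

end RealRooted

theorem sq_sub_one_pow_eq_prod_X_sub_C {R : Type*} [CommRing R] (ℓ : ℕ) :
    (X ^ 2 - 1 : R[X]) ^ ℓ = ((ℓ • {1, -1} : Multiset R).map fun r => X - C r).prod := by
  have factorization : (X ^ 2 - 1 : R[X]) = (X - C 1) * (X - C (-1)) := by
    rw [C_neg, C_1]
    ring
  simp [factorization, Multiset.map_nsmul, Multiset.prod_nsmul]

theorem iteratedDeriv_sq_sub_one_pow_mem_Icc {z : ℝ} (hz : 1 ≤ z) (ℓ n : ℕ) :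
    iteratedDeriv n (fun x : ℝ => (x ^ 2 - 1) ^ ℓ) z ∈
      Icc ((2 * ℓ).descFactorial n * (z - 1) ^ (2 * ℓ - n))
        ((2 * ℓ).descFactorial n * (z + 1) ^ (2 * ℓ - n)) := by
  set s : Multiset ℝ := ℓ • {1, -1}
  have card_s : s.card = 2 * ℓ := by simp [s, mul_comm]
  have mem_s : ∀ r ∈ s, r = 1 ∨ r = -1 := fun r hr => by
    simpa using Multiset.mem_of_mem_nsmul hr
  have deriv_eq : iteratedDeriv n (fun x : ℝ => (x ^ 2 - 1) ^ ℓ) z =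
      (derivative^[n] (s.map fun r => X - C r).prod).eval z := by
    have eval_eq : (fun x : ℝ => (x ^ 2 - 1) ^ ℓ) =
        fun x => ((X ^ 2 - 1 : ℝ[X]) ^ ℓ).eval x := by simp
    rw [← sq_sub_one_pow_eq_prod_X_sub_C, eval_eq, iteratedDeriv_polynomial_eval]
  rw [deriv_eq, ← card_s, ← sub_neg_eq_add z 1]
  refine ⟨descFactorial_mul_pow_le_eval_iterate_derivative_prod_X_sub_C (fun r hr => ?_) hz n,
    eval_iterate_derivative_prod_X_sub_C_le_descFactorial_mul_pow (fun r hr => ?_) n⟩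
  · rcases mem_s r hr with rfl | rfl <;> norm_num
  · rcases mem_s r hr with rfl | rfl <;> constructor <;> linarith

theorem mul_rpow_half_mem_Icc {a b : ℝ} (ha : 0 ≤ a) (hab : a ≤ b) (m : ℕ) :
    (a * b) ^ ((m : ℝ) / 2) ∈ Icc (a ^ m) (b ^ m) := by
  have hb : 0 ≤ b := ha.trans hab
  rw [Real.rpow_div_two_eq_sqrt _ (mul_nonneg ha hb), Real.rpow_natCast]
  have le_sqrt : a ≤ √(a * b) := Real.le_sqrt_of_sq_le (by nlinarith)
  have sqrt_le : √(a * b) ≤ b := Real.sqrt_le_iff.2 ⟨hb, by nlinarith⟩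
  exact ⟨by gcongr, by gcongr⟩

theorem gamma_natCast_add_half_eq_factorial (n : ℕ) :
    Real.Gamma (n + 1 / 2) = (2 * n)! * √Real.pi / (4 ^ n * n !) := by
  have duplication := Real.Gamma_mul_Gamma_add_half ((n : ℝ) + 1 / 2)
  have two_rpow : (2 : ℝ) ^ (1 - 2 * ((n : ℝ) + 1 / 2)) = (4 ^ n)⁻¹ := by
    rw [show 1 - 2 * ((n : ℝ) + 1 / 2) = -((2 * n : ℕ) : ℝ) by push_cast; ring,
      Real.rpow_neg zero_le_two, Real.rpow_natCast, pow_mul]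
    norm_num
  rw [two_rpow, show (n : ℝ) + 1 / 2 + 1 / 2 = n + 1 by ring, Real.Gamma_nat_eq_factorial,
    show 2 * ((n : ℝ) + 1 / 2) = (2 * n : ℕ) + 1 by push_cast; ring,
    Real.Gamma_nat_eq_factorial] at duplication
  rw [eq_div_iff (by positivity), mul_left_comm, duplication]
  field_simp

theorem normalized_assocLegendre_eq {ℓ m : ℕ} (hm : m ≤ ℓ) (z : ℝ) :
    √Real.pi * (ℓ - m)! * assocLegendre ℓ m z / (2 ^ ℓ * Real.Gamma (ℓ + 1 / 2)) =
      (z ^ 2 - 1) ^ ((m : ℝ) / 2) *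
        (iteratedDeriv (ℓ + m) (fun x : ℝ => (x ^ 2 - 1) ^ ℓ) z /
          (2 * ℓ).descFactorial (ℓ + m)) := by
  have factorial_eq : ((2 * ℓ)! : ℝ) = (ℓ - m)! * (2 * ℓ).descFactorial (ℓ + m) := by
    rw [← Nat.factorial_mul_descFactorial (show ℓ + m ≤ 2 * ℓ by lia),
      show 2 * ℓ - (ℓ + m) = ℓ - m by lia, Nat.cast_mul]
  have four_pow : (4 : ℝ) ^ ℓ = 2 ^ ℓ * 2 ^ ℓ := by
    rw [← mul_pow]
    norm_num
  rw [assocLegendre, gamma_natCast_add_half_eq_factorial, factorial_eq, four_pow]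
  field_simp

/-- For `m ≤ ℓ` and real `z ≥ 1`,
`(z−1)^ℓ ≤ √π (ℓ−m)! P_ℓ^m(z) / (2^ℓ Γ(ℓ+1/2)) ≤ (z+1)^ℓ` (Lemma 5.2 of the paper). -/
theorem assocLegendre_two_sided_bound (ℓ m : ℕ) (hm : m ≤ ℓ) (z : ℝ) (hz : 1 ≤ z) :
    (z - 1) ^ ℓ ≤
        Real.sqrt Real.pi * ((ℓ - m)! : ℝ) * assocLegendre ℓ m z /
          (2 ^ ℓ * Real.Gamma ((ℓ : ℝ) + 1 / 2)) ∧
      Real.sqrt Real.pi * ((ℓ - m)! : ℝ) * assocLegendre ℓ m z /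
          (2 ^ ℓ * Real.Gamma ((ℓ : ℝ) + 1 / 2)) ≤ (z + 1) ^ ℓ := by
  rw [normalized_assocLegendre_eq hm]
  have hz₀ : 0 ≤ z - 1 := sub_nonneg.2 hz
  have power_bounds := mul_rpow_half_mem_Icc hz₀ (by linarith : z - 1 ≤ z + 1) m
  rw [show (z - 1) * (z + 1) = z ^ 2 - 1 by ring] at power_bounds
  have deriv_bounds := iteratedDeriv_sq_sub_one_pow_mem_Icc hz ℓ (ℓ + m)
  have descFactorial_pos : (0 : ℝ) < (2 * ℓ).descFactorial (ℓ + m) := by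
    exact_mod_cast Nat.descFactorial_pos.2 (by lia)
  rw [show 2 * ℓ - (ℓ + m) = ℓ - m by lia, mem_Icc, ← le_div_iff₀' descFactorial_pos,
    ← div_le_iff₀' descFactorial_pos] at deriv_bounds
  rw [← pow_mul_pow_sub (z - 1) hm, ← pow_mul_pow_sub (z + 1) hm]
  have sub_pow_nonneg := pow_nonneg hz₀
  exact ⟨mul_le_mul power_bounds.1 deriv_bounds.1 (sub_pow_nonneg _)
      ((sub_pow_nonneg _).trans power_bounds.1),
    mul_le_mul power_bounds.2 deriv_bounds.2 ((sub_pow_nonneg _).trans deriv_bounds.1)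
      (by positivity)⟩
end
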